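/- Let Γ be an abelian group with no nonzero n-torsion, E a Γ-graded division ring with center T = Z(E) such that E is unramified over T (Γ_E = Γ_T), and suppose Mₙ(E₀) ≠ M₂(𝔽₂). Let S = Mₙ(E) with the unshifted grading. Then the kernel of the homogeneous Dieudonné determinant det_E equals the commutator subgroup [GLₙ^h(E), GLₙ^h(E)], so det_E induces an injective group homomorphism GLₙ^h(E)/[GLₙ^h(E),GLₙ^h(E)] ↪ E_h*/[E_h*,E_h*]. -/

import Mathlib

set_option maxHeartbeats 1000000

/-- The degree-`lam` homogeneous component of the matrix ring `Mₙ(E)(δ̄)` over a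
`Γ`-graded ring `E`, with the grading shifted by `δ̄`.  With `δ̄ = 0` this is the
unshifted grading, `Mₙ(E)_lam = Mₙ(E_lam)`. -/
def MatrixGrade {Γ E : Type*} [AddCommGroup Γ] [Ring E] (𝒜 : Γ → AddSubgroup E)
    {ι : Type*} (δ : ι → Γ) (lam : Γ) : Set (Matrix ι ι E) :=
  {A | ∀ i j, A i j ∈ 𝒜 (lam + δ j - δ i)}

/-- Unipotent lower triangular matrix. -/
def UnipotentLower {R : Type*} [Zero R] [One R] {n : ℕ}
    (T : Matrix (Fin n) (Fin n) R) : Prop :=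
  (∀ i j : Fin n, i < j → T i j = 0) ∧ ∀ i, T i i = 1

/-- Unipotent upper triangular matrix. -/
def UnipotentUpper {R : Type*} [Zero R] [One R] {n : ℕ}
    (V : Matrix (Fin n) (Fin n) R) : Prop :=
  (∀ i j : Fin n, j < i → V i j = 0) ∧ ∀ i, V i i = 1

/-!
Over a division ring other than `𝔽₂` in size two, every transvection is a commutator, so every
invertible matrix over `E₀` is, up to commutators, a diagonal matrix `diag(d, 1, …, 1)`. A
homogeneous matrix of degree `γ` is a scalar `t` of degree `γ` times a matrix over `E₀`, hence its
determinant is the class of `tⁿ d`. Since `E` is unramified over its center, every homogeneous unit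
is a central unit times a unit of `E₀`; thus `[E_h*, E_h*] = [E₀*, E₀*]` lies in degree zero. If the
determinant is trivial, then `nγ = 0`, so `γ = 0` and the matrix lies in `GLₙ(E₀)`, where
`d ∈ [E₀*, E₀*]` makes it a product of commutators.
-/

section Transvection

open Matrix
open scoped commutatorElement

variable {ι R : Type*} [Fintype ι] [DecidableEq ι] [Ring R]

/-- The dilatransvection `x ↦ x + v * f(x)` attached to a column vector `v` and a row vector `f`,
where `u = 1 + f(v)` is a unit; the matrix counterpart of `LinearEquiv.dilatransvection`. -/
def dilatransvectionUnit (v f : ι → R) (u : Rˣ) (hu : 1 + f ⬝ᵥ v = u) : (Matrix ι ι R)ˣ where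
  val := 1 + vecMulVec v f
  inv := 1 - vecMulVec v ((u⁻¹ : Rˣ).val • f)
  val_inv := by
    simp [mul_sub, add_mul, vecMulVec_mul_vecMulVec, eq_sub_of_add_eq' hu, smul_smul,
      sub_mul, sub_smul, vecMulVec_sub]
  inv_val := by
    simp [mul_add, sub_mul, vecMulVec_mul_vecMulVec, eq_sub_of_add_eq' hu, smul_dotProduct,
      mul_sub, sub_smul, vecMulVec_sub]

/-- The transvection `x ↦ x + v * f(x)`, where `f(v) = 0`; the matrix counterpart of
`LinearEquiv.transvection`. -/
def transvectionUnit (v f : ι → R) (h : f ⬝ᵥ v = 0) : (Matrix ι ι R)ˣ :=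
  dilatransvectionUnit v f 1 (by simp [h])

theorem dilatransvectionUnit_mulVec (v f : ι → R) (u : Rˣ) (hu : 1 + f ⬝ᵥ v = u) (w : ι → R) :
    (dilatransvectionUnit v f u hu).val *ᵥ w = w + MulOpposite.op (f ⬝ᵥ w) • v := by
  rw [dilatransvectionUnit, add_mulVec, one_mulVec, vecMulVec_mulVec]

theorem transvectionUnit_mulVec (v f : ι → R) (h : f ⬝ᵥ v = 0) (w : ι → R) :
    (transvectionUnit v f h).val *ᵥ w = w + MulOpposite.op (f ⬝ᵥ w) • v :=
  dilatransvectionUnit_mulVec v f 1 _ w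

theorem vecMul_dilatransvectionUnit (v f : ι → R) (u : Rˣ) (hu : 1 + f ⬝ᵥ v = u) (g : ι → R) :
    g ᵥ* (dilatransvectionUnit v f u hu).val = g + (g ⬝ᵥ v) • f := by
  rw [dilatransvectionUnit, vecMul_add, vecMul_one, vecMul_vecMulVec]

theorem commutatorElement_transvectionUnit {g : (Matrix ι ι R)ˣ} {v w f : ι → R}
    (hv : f ⬝ᵥ v = 0) (hw : f ⬝ᵥ w = 0) (hf : f ᵥ* g.val = f) (hgw : g.val *ᵥ w = w + v) :
    ⁅g, transvectionUnit w f hw⁆ = transvectionUnit v f hv := by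
  rw [commutatorElement_def, mul_inv_eq_iff_eq_mul, mul_inv_eq_iff_eq_mul]
  ext1
  simp only [transvectionUnit, dilatransvectionUnit, Units.val_mul, mul_add, add_mul, one_mul,
    mul_one, mul_vecMulVec, hgw, vecMulVec_mul, hf, vecMulVec_mulVec, hw, add_vecMulVec,
    MulOpposite.op_zero, zero_smul, zero_vecMulVec, add_zero]
  abel

/-- The subgroup of `GLₙ(R)` generated by all transvections. -/
def transvectionSubgroup (ι R : Type*) [Fintype ι] [DecidableEq ι] [Ring R] :
    Subgroup (Matrix ι ι R)ˣ :=
  Subgroup.closure {T | ∃ v f h, transvectionUnit v f h = T}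

theorem transvectionUnit_mem_transvectionSubgroup (v f : ι → R) (h : f ⬝ᵥ v = 0) :
    transvectionUnit v f h ∈ transvectionSubgroup ι R :=
  Subgroup.subset_closure ⟨v, f, h, rfl⟩

theorem exists_mem_transvectionSubgroup_mulVec_eq {v w f : ι → R} (hv : f ⬝ᵥ v = 1)
    (hw : f ⬝ᵥ w = 1) :
    ∃ C ∈ transvectionSubgroup ι R, C.val *ᵥ v = w ∧ ∀ x, f ⬝ᵥ x = 0 → C.val *ᵥ x = x := by
  refine ⟨transvectionUnit (w - v) f (by simp [hv, hw]),
    transvectionUnit_mem_transvectionSubgroup _ _ _, ?_, fun x hx => ?_⟩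
  · simp [transvectionUnit_mulVec, hv]
  · simp [transvectionUnit_mulVec, hx]

variable {D : Type*} [DivisionRing D]

omit [DecidableEq ι] in
theorem exists_dotProduct_eq_one_of_ne_one {x : D} (hx0 : x ≠ 0) (hx1 : x ≠ 1) {f v : ι → D}
    (hv : v ≠ 0) (hfv : f ⬝ᵥ v = 0) :
    ∃ h w : ι → D, h ⬝ᵥ w = 1 ∧ f ⬝ᵥ w = 0 ∧ 1 + h ⬝ᵥ v ≠ 0 := by
  classical
  obtain ⟨p, hp⟩ := Function.ne_iff.1 hv
  have hx : x - 1 ≠ 0 := sub_ne_zero.2 hx1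
  have hhv : Pi.single p ((x - 1) * (v p)⁻¹) ⬝ᵥ v = x - 1 := by
    rw [single_dotProduct, inv_mul_cancel_right₀ hp]
  refine ⟨Pi.single p ((x - 1) * (v p)⁻¹), MulOpposite.op (x - 1)⁻¹ • v, ?_, ?_, ?_⟩
  · rw [dotProduct_smul, hhv, op_smul_eq_mul, mul_inv_cancel₀ hx]
  · rw [dotProduct_smul, hfv, smul_zero]
  · rwa [hhv, add_sub_cancel]

omit [DecidableEq ι] in
theorem exists_dotProduct_eq_one_of_card_ne_two (hι : Fintype.card ι ≠ 2) {f v : ι → D}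
    (hf : f ≠ 0) (hv : v ≠ 0) (hfv : f ⬝ᵥ v = 0) :
    ∃ h w : ι → D, h ⬝ᵥ w = 1 ∧ f ⬝ᵥ w = 0 ∧ h ⬝ᵥ v = 0 := by
  classical
  obtain ⟨k, hk⟩ : ∃ k, f k ≠ 0 := Function.ne_iff.1 hf
  obtain ⟨i, hik, hi⟩ : ∃ i ≠ k, v i ≠ 0 := by
    by_contra! h
    have hfvk : f k * v k = 0 := by
      rwa [dotProduct, Finset.sum_eq_single k (fun i _ hi => by rw [h i hi, mul_zero])
        (by simp)] at hfv
    have hvk : v k = 0 := (mul_eq_zero.1 hfvk).resolve_left hk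
    exact hv (funext fun i => (eq_or_ne i k).elim (fun hi => hi ▸ hvk) (h i))
  obtain ⟨j, hji, hjk⟩ : ∃ j, j ≠ i ∧ j ≠ k := by
    by_contra! h
    refine hι ?_
    rw [← Finset.card_univ, ← Finset.card_pair hik]
    congr 1
    ext j
    simpa [or_iff_not_imp_left] using h j
  refine ⟨Pi.single j 1 - Pi.single i (v j * (v i)⁻¹),
    Pi.single j 1 - Pi.single k ((f k)⁻¹ * f j), ?_, ?_, ?_⟩
  · simp [hji, hjk, hik]
  · simp [dotProduct_sub, mul_inv_cancel_left₀ hk]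
  · simp [sub_dotProduct, inv_mul_cancel_right₀ hi]

theorem transvectionUnit_mem_commutator (hD : Fintype.card ι ≠ 2 ∨ ∃ x : D, x ≠ 0 ∧ x ≠ 1)
    (v f : ι → D) (hfv : f ⬝ᵥ v = 0) :
    transvectionUnit v f hfv ∈ commutator (Matrix ι ι D)ˣ := by
  by_cases h0 : v = 0 ∨ f = 0
  · have : transvectionUnit v f hfv = 1 := by
      ext1
      rcases h0 with rfl | rfl <;> simp [transvectionUnit, dilatransvectionUnit]
    exact this ▸ one_mem _
  obtain ⟨hv, hf⟩ := not_or.1 h0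
  obtain ⟨h, w, hhw, hfw, hhv⟩ : ∃ h w : ι → D, h ⬝ᵥ w = 1 ∧ f ⬝ᵥ w = 0 ∧ 1 + h ⬝ᵥ v ≠ 0 := by
    rcases hD with hι | ⟨x, hx0, hx1⟩
    · obtain ⟨h, w, hhw, hfw, hhv⟩ := exists_dotProduct_eq_one_of_card_ne_two hι hf hv hfv
      exact ⟨h, w, hhw, hfw, by simp [hhv]⟩
    · exact exists_dotProduct_eq_one_of_ne_one hx0 hx1 hv hfv
  obtain ⟨u, hu⟩ : ∃ u : Dˣ, 1 + h ⬝ᵥ v = u := ⟨Units.mk0 _ hhv, (Units.val_mk0 hhv).symm⟩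
  have hgf : f ᵥ* (dilatransvectionUnit v h u hu).val = f := by
    rw [vecMul_dilatransvectionUnit, hfv, zero_smul, add_zero]
  have hgw : (dilatransvectionUnit v h u hu).val *ᵥ w = w + v := by
    rw [dilatransvectionUnit_mulVec, hhw, MulOpposite.op_one, one_smul]
  rw [← commutatorElement_transvectionUnit hfv hfw hgf hgw]
  exact Subgroup.commutator_mem_commutator (Subgroup.mem_top _) (Subgroup.mem_top _)

theorem transvectionSubgroup_le_commutator
    (hD : Fintype.card ι ≠ 2 ∨ ∃ x : D, x ≠ 0 ∧ x ≠ 1) :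
    transvectionSubgroup ι D ≤ commutator (Matrix ι ι D)ˣ := by
  rw [transvectionSubgroup, Subgroup.closure_le]
  rintro _ ⟨v, f, h, rfl⟩
  exact transvectionUnit_mem_commutator hD v f h

theorem mulVec_eq_self_of_forall_notMem {A : Matrix ι ι R} {s : Finset ι}
    (hA : ∀ j ∈ s, A *ᵥ Pi.single j 1 = Pi.single j 1) {x : ι → R} (hx : ∀ i ∉ s, x i = 0) :
    A *ᵥ x = x := by
  have hx' : ∑ j ∈ s, MulOpposite.op (x j) • Pi.single j 1 = x := by
    ext i
    by_cases hi : i ∈ s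
    · simp [Finset.sum_apply, Pi.single_apply, hi]
    · simp [Finset.sum_apply, Pi.single_apply, hi, hx i hi]
  rw [← hx', mulVec_sum]
  refine Finset.sum_congr rfl fun j hj => ?_
  rw [mulVec_smul, hA j hj]

theorem exists_notMem_mulVec_single_apply_ne_zero [Nontrivial R] (A : (Matrix ι ι R)ˣ)
    {s : Finset ι} (hA : ∀ j ∈ s, A.val *ᵥ Pi.single j 1 = Pi.single j 1) {k : ι} (hk : k ∉ s) :
    ∃ i ∉ s, (A.val *ᵥ Pi.single k 1) i ≠ 0 := by
  by_contra! h
  have hAk : A.val *ᵥ Pi.single k 1 = Pi.single k 1 := by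
    have hAAk := mulVec_eq_self_of_forall_notMem hA h
    simpa only [mulVec_mulVec, Units.inv_mul_cancel_left, Units.inv_mul, one_mulVec] using
      congrArg (A⁻¹.val *ᵥ ·) hAAk
  simpa [hAk] using h k hk

theorem exists_mem_transvectionSubgroup_mulVec_eq_single_of_ne {s : Finset ι} {k p : ι}
    (hk : k ∉ s) (hp : p ∉ s) (hpk : p ≠ k) {v : ι → D} (hv : v p ≠ 0) :
    ∃ C ∈ transvectionSubgroup ι D, C.val *ᵥ v = Pi.single k 1 ∧
      ∀ j ∈ s, C.val *ᵥ Pi.single j 1 = Pi.single j 1 := by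
  obtain ⟨C, hC, hCv, hCs⟩ := exists_mem_transvectionSubgroup_mulVec_eq
    (v := v) (w := Pi.single k 1) (f := Pi.single k 1 + Pi.single p ((1 - v k) * (v p)⁻¹))
    (by simp [add_dotProduct, inv_mul_cancel_right₀ hv]) (by simp [hpk.symm])
  refine ⟨C, hC, hCv, fun j hj => hCs _ ?_⟩
  simp [ne_of_mem_of_not_mem hj hk, ne_of_mem_of_not_mem hj hp]

theorem exists_mem_transvectionSubgroup_mulVec_eq_single {s : Finset ι} {k q : ι} (hk : k ∉ s)
    (hq : q ∉ s) (hqk : q ≠ k) {v : ι → D} (hv : ∃ p ∉ s, v p ≠ 0) :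
    ∃ C ∈ transvectionSubgroup ι D, C.val *ᵥ v = Pi.single k 1 ∧
      ∀ j ∈ s, C.val *ᵥ Pi.single j 1 = Pi.single j 1 := by
  obtain ⟨p, hps, hvp⟩ := hv
  by_cases hpk : p = k
  swap
  · exact exists_mem_transvectionSubgroup_mulVec_eq_single_of_ne hk hps hpk hvp
  by_cases hvq : v q = 0
  swap
  · exact exists_mem_transvectionSubgroup_mulVec_eq_single_of_ne hk hq hqk hvq
  subst hpk
  let T := transvectionUnit (Pi.single q 1) (Pi.single p (1 : D)) (by simp [hqk.symm])
  have hTv : (T.val *ᵥ v) q ≠ 0 := by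
    simpa [T, transvectionUnit_mulVec, hvq] using hvp
  have hTs : ∀ j ∈ s, T.val *ᵥ Pi.single j 1 = Pi.single j 1 := fun j hj => by
    rw [transvectionUnit_mulVec, single_one_dotProduct,
      Pi.single_eq_of_ne (ne_of_mem_of_not_mem hj hk).symm, MulOpposite.op_zero, zero_smul,
      add_zero]
  obtain ⟨C, hC, hCv, hCs⟩ :=
    exists_mem_transvectionSubgroup_mulVec_eq_single_of_ne hk hq hqk hTv
  refine ⟨C * T, mul_mem hC (transvectionUnit_mem_transvectionSubgroup _ _ _), ?_, fun j hj => ?_⟩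
  · rw [Units.val_mul, ← mulVec_mulVec, hCv]
  · rw [Units.val_mul, ← mulVec_mulVec, hTs j hj, hCs j hj]

theorem exists_mem_transvectionSubgroup_forall_mulVec_eq_single (A : (Matrix ι ι D)ˣ)
    {s : Finset ι} {q : ι} (hq : q ∉ s) :
    ∃ C ∈ transvectionSubgroup ι D, ∀ j ∈ s, (C * A).val *ᵥ Pi.single j 1 = Pi.single j 1 := by
  induction s using Finset.induction_on with
  | empty => exact ⟨1, one_mem _, by simp⟩
  | insert k s hk ih =>
    obtain ⟨hqk, hqs⟩ := not_or.1 (Finset.mem_insert.not.1 hq)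
    obtain ⟨C, hC, hCA⟩ := ih hqs
    obtain ⟨C', hC', hC'k, hC's⟩ := exists_mem_transvectionSubgroup_mulVec_eq_single hk hqs hqk
      (exists_notMem_mulVec_single_apply_ne_zero (C * A) hCA hk)
    refine ⟨C' * C, mul_mem hC' hC, fun j hj => ?_⟩
    rw [mul_assoc, Units.val_mul, ← mulVec_mulVec]
    rcases Finset.mem_insert.1 hj with rfl | hj
    · exact hC'k
    · rw [hCA j hj, hC's j hj]

/-- Diagonal matrices of units, as a homomorphism to `GLₙ(R)`. -/
def diagonalUnits : (ι → Rˣ) →* (Matrix ι ι R)ˣ :=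
  (Units.map (diagonalRingHom ι R).toMonoidHom).comp
    (MulEquiv.piUnits (M := fun _ : ι => R)).symm.toMonoidHom

theorem val_diagonalUnits (d : ι → Rˣ) :
    (diagonalUnits d).val = diagonal fun i => (d i).val := rfl

theorem exists_mem_transvectionSubgroup_mul_eq_diagonalUnits (i : ι) (A : (Matrix ι ι D)ˣ) :
    ∃ C ∈ transvectionSubgroup ι D, ∃ d : Dˣ, C * A = diagonalUnits (Pi.mulSingle i d) := by
  have hi : i ∉ Finset.univ.erase i := Finset.notMem_erase i _
  obtain ⟨C, hC, hCA⟩ := exists_mem_transvectionSubgroup_forall_mulVec_eq_single A hi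
  obtain ⟨p, hp, hd⟩ := exists_notMem_mulVec_single_apply_ne_zero (C * A) hCA hi
  obtain rfl : p = i := by simpa using hp
  set v := (C * A).val *ᵥ Pi.single p 1
  obtain ⟨C', hC', hC'v, hC's⟩ := exists_mem_transvectionSubgroup_mulVec_eq
    (v := v) (w := Pi.single p (v p)) (f := Pi.single p (v p)⁻¹) (by simp [hd]) (by simp [hd])
  refine ⟨C' * C, mul_mem hC' hC, Units.mk0 _ hd, Units.ext (ext_of_mulVec_single fun j => ?_)⟩
  rw [mul_assoc, Units.val_mul, ← mulVec_mulVec, val_diagonalUnits, diagonal_mulVec_single,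
    mul_one]
  rcases eq_or_ne j p with rfl | hj
  · rw [hC'v, Pi.mulSingle_eq_same, Units.val_mk0]
  · rw [hCA j (by simp [hj]), hC's _ (by simp [hj]), Pi.mulSingle_eq_of_ne hj, Units.val_one]

end Transvection

section Commutator

open scoped commutatorElement

variable {G G' : Type*} [Group G] [Group G']

theorem map_mem_commutator (f : G →* G') {x : G} (hx : x ∈ commutator G) :
    f x ∈ commutator G' := by
  have h := Subgroup.mem_map_of_mem f hx
  rw [commutator_def, Subgroup.map_commutator] at h
  exact Subgroup.commutator_mono le_top le_top h

theorem commutatorElement_center_mul_left {z : G} (hz : z ∈ Subgroup.center G) (g h : G) :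
    ⁅z * g, h⁆ = ⁅g, h⁆ := by
  rw [Subgroup.mem_center_iff] at hz
  rw [commutatorElement_def, ← hz g, mul_assoc g z h, ← hz h]
  simp only [commutatorElement_def, mul_inv_rev, mul_assoc, mul_inv_cancel_left]

theorem commutatorElement_center_mul_right {z : G} (hz : z ∈ Subgroup.center G) (g h : G) :
    ⁅g, z * h⁆ = ⁅g, h⁆ := by
  rw [← commutatorElement_inv, commutatorElement_center_mul_left hz, commutatorElement_inv]

theorem abelianization_lift_injective {A : Type*} [CommGroup A] {f : G →* A}
    (hf : f.ker = commutator G) : Function.Injective (Abelianization.lift f) := by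
  refine (MonoidHom.ker_eq_bot_iff _).1 ((QuotientGroup.ker_lift (commutator G) f hf.ge).trans ?_)
  rw [hf]
  exact QuotientGroup.map_mk'_self _

end Commutator

section Graded

open SetLike Matrix

variable {Γ E ι : Type*} [AddCommGroup Γ] [Ring E] (𝒜 : Γ → AddSubgroup E)

/-- A graded division ring: every nonzero homogeneous element of `E` is a unit. -/
def IsGradedDivisionRing : Prop :=
  ∀ (γ : Γ) (x : E), x ∈ 𝒜 γ → x ≠ 0 → IsUnit x

/-- `E` is unramified over its center `T`: `Γ_E = Γ_T`. -/
def IsUnramifiedOverCenter : Prop :=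
  ∀ γ : Γ, (∃ x : E, x ≠ 0 ∧ x ∈ 𝒜 γ) → ∃ x : E, x ≠ 0 ∧ x ∈ 𝒜 γ ∧ x ∈ Set.center E

theorem diagonal_mem_matrixGrade [DecidableEq ι] {δ : ι → Γ} {γ : Γ} {u : ι → E}
    (hu : ∀ i, u i ∈ 𝒜 γ) : diagonal u ∈ MatrixGrade 𝒜 δ γ := fun i j => by
  obtain rfl | hij := eq_or_ne i j
  · simpa using hu i
  · rw [diagonal_apply_ne u hij]
    exact zero_mem _

variable [DecidableEq Γ] [GradedRing 𝒜]

theorem inv_mem_neg {γ : Γ} {u : Eˣ} (hu : u.val ∈ 𝒜 γ) : u⁻¹.val ∈ 𝒜 (-γ) := by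
  have h : u.val * GradedRing.proj 𝒜 (-γ) u⁻¹.val = 1 := by
    rw [GradedRing.proj_apply, ← DirectSum.coe_decompose_mul_add_of_left_mem 𝒜 hu, u.mul_inv,
      add_neg_cancel, DirectSum.decompose_of_mem_same 𝒜 GradedOne.one_mem]
  rw [u.inv_eq_of_mul_eq_one_right h]
  exact SetLike.coe_mem _

/-- The group `E_h*` of homogeneous units. -/
def homogeneousUnits : Subgroup Eˣ where
  carrier := {u | ∃ γ, u.val ∈ 𝒜 γ}
  one_mem' := ⟨0, GradedOne.one_mem⟩
  mul_mem' := fun ⟨_, hu⟩ ⟨_, hv⟩ => ⟨_, mul_mem_graded hu hv⟩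
  inv_mem' := fun ⟨_, hu⟩ => ⟨_, inv_mem_neg 𝒜 hu⟩

section MatrixGrade

variable {𝒜} {δ : ι → Γ}

theorem mul_mem_matrixGrade [Fintype ι] {γ μ : Γ} {A B : Matrix ι ι E}
    (hA : A ∈ MatrixGrade 𝒜 δ γ) (hB : B ∈ MatrixGrade 𝒜 δ μ) :
    A * B ∈ MatrixGrade 𝒜 δ (γ + μ) := fun i k => by
  rw [mul_apply]
  refine sum_mem fun j _ => ?_
  have hdeg : γ + δ j - δ i + (μ + δ k - δ j) = γ + μ + δ k - δ i := by abel
  exact hdeg ▸ mul_mem_graded (hA i j) (hB j k)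

variable [DecidableEq ι]

theorem one_mem_matrixGrade : (1 : Matrix ι ι E) ∈ MatrixGrade 𝒜 δ 0 :=
  diagonal_mem_matrixGrade 𝒜 fun _ => GradedOne.one_mem

variable [Fintype ι]

theorem inv_mem_matrixGrade {γ : Γ} {A : (Matrix ι ι E)ˣ} (hA : A.val ∈ MatrixGrade 𝒜 δ γ) :
    A⁻¹.val ∈ MatrixGrade 𝒜 δ (-γ) := by
  let B : Matrix ι ι E := of fun j k => GradedRing.proj 𝒜 (-γ + δ k - δ j) (A⁻¹.val j k)
  have hAB : A.val * B = 1 := by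
    ext i k
    have hdeg : ∀ j, γ + δ j - δ i + (-γ + δ k - δ j) = 0 + δ k - δ i := fun j => by abel
    have hproj : ∀ j, A.val i j * B j k =
        GradedRing.proj 𝒜 (0 + δ k - δ i) (A.val i j * A⁻¹.val j k) := fun j => by
      rw [show B j k = GradedRing.proj 𝒜 _ _ from rfl, GradedRing.proj_apply,
        GradedRing.proj_apply, ← hdeg j, DirectSum.coe_decompose_mul_add_of_left_mem 𝒜 (hA i j)]
    rw [mul_apply, Finset.sum_congr rfl fun j _ => hproj j, ← map_sum, ← mul_apply, A.mul_inv,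
      GradedRing.proj_apply, DirectSum.decompose_of_mem_same 𝒜 (one_mem_matrixGrade i k)]
  rw [A.inv_eq_of_mul_eq_one_right hAB]
  exact fun j k => SetLike.coe_mem _

variable (𝒜 δ)

/-- The group of homogeneous units of `Mₙ(E)(δ̄)`; with `δ̄ = 0` this is `GLₙ^h(E)`. -/
def homogeneousGL : Subgroup (Matrix ι ι E)ˣ where
  carrier := {A | ∃ γ, A.val ∈ MatrixGrade 𝒜 δ γ}
  one_mem' := ⟨0, one_mem_matrixGrade⟩
  mul_mem' := fun ⟨_, hA⟩ ⟨_, hB⟩ => ⟨_, mul_mem_matrixGrade hA hB⟩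
  inv_mem' := fun ⟨_, hA⟩ => ⟨_, inv_mem_matrixGrade hA⟩

end MatrixGrade

/-- The inclusion `E₀* → E_h*`. -/
def gradeZeroUnits : (GradeZero.subring 𝒜)ˣ →* homogeneousUnits 𝒜 :=
  (Units.map (GradeZero.subring 𝒜).subtype.toMonoidHom).codRestrict _ fun d => ⟨0, d.val.2⟩

theorem gradeZeroUnits_injective : Function.Injective (gradeZeroUnits 𝒜) :=
  (MonoidHom.injective_codRestrict _ _ _).2 (Units.map_injective Subtype.val_injective)

theorem exists_gradeZeroUnits_eq (u : homogeneousUnits 𝒜) (hu : u.val.val ∈ 𝒜 0) :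
    ∃ d, gradeZeroUnits 𝒜 d = u := by
  have hu' : u.val⁻¹.val ∈ 𝒜 0 := by simpa using inv_mem_neg 𝒜 hu
  exact ⟨⟨⟨u.val, hu⟩, ⟨u.val⁻¹.val, hu'⟩, Subtype.ext u.val.mul_inv,
    Subtype.ext u.val.inv_mul⟩, rfl⟩

/-- The inclusion `GLₙ(E₀) → GLₙ^h(E)`. -/
def gradeZeroGL (ι : Type*) [Fintype ι] [DecidableEq ι] :
    (Matrix ι ι (GradeZero.subring 𝒜))ˣ →* homogeneousGL 𝒜 (0 : ι → Γ) :=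
  (Units.map (GradeZero.subring 𝒜).subtype.mapMatrix.toMonoidHom).codRestrict _
    fun B => ⟨0, fun i j => by
      rw [Pi.zero_apply, Pi.zero_apply, add_zero, sub_zero]
      exact (B.val i j).2⟩

/-- The inclusion `E_h* → GLₙ^h(E)` as scalar matrices. -/
def scalarGL (ι : Type*) [Fintype ι] [DecidableEq ι] :
    homogeneousUnits 𝒜 →* homogeneousGL 𝒜 (0 : ι → Γ) :=
  ((diagonalUnits.comp (Pi.constMonoidHom ι Eˣ)).comp (homogeneousUnits 𝒜).subtype).codRestrict _
    fun ⟨_, γ, hu⟩ => ⟨γ, diagonal_mem_matrixGrade 𝒜 fun _ => hu⟩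

section MatrixUnits

variable [Fintype ι] [DecidableEq ι]

theorem exists_gradeZeroGL_eq (A : homogeneousGL 𝒜 (0 : ι → Γ))
    (hA : A.val.val ∈ MatrixGrade 𝒜 (0 : ι → Γ) 0) : ∃ B, gradeZeroGL 𝒜 ι B = A := by
  have hA₀ : ∀ i j, A.val.val i j ∈ 𝒜 0 := fun i j => by simpa using hA i j
  have hA₀' : ∀ i j, A.val⁻¹.val i j ∈ 𝒜 0 := fun i j => by
    simpa using inv_mem_matrixGrade hA i j
  have hinj : Function.Injective ((GradeZero.subring 𝒜).subtype.mapMatrix (m := ι)) :=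
    map_injective Subtype.val_injective
  refine ⟨⟨of fun i j => ⟨_, hA₀ i j⟩, of fun i j => ⟨_, hA₀' i j⟩, hinj ?_, hinj ?_⟩, rfl⟩
  · rw [map_mul, map_one]
    exact A.val.mul_inv
  · rw [map_mul, map_one]
    exact A.val.inv_mul

theorem val_gradeZeroGL_diagonalUnits (u : ι → (GradeZero.subring 𝒜)ˣ) :
    (gradeZeroGL 𝒜 ι (diagonalUnits u)).val = diagonalUnits fun i => gradeZeroUnits 𝒜 (u i) :=
  Units.ext (diagonal_map rfl)

end MatrixUnits

variable {𝒜}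

namespace IsGradedDivisionRing

/-- The degree-zero part `E₀` of a graded division ring as a division ring. -/
noncomputable abbrev gradeZeroDivisionRing [Nontrivial E] (hdiv : IsGradedDivisionRing 𝒜) :
    DivisionRing (GradeZero.subring 𝒜) :=
  DivisionRing.ofIsUnitOrEqZero fun x => by
    refine or_iff_not_imp_right.2 fun hx => ?_
    obtain ⟨u, hu⟩ := hdiv 0 x x.2 (Subtype.coe_ne_coe.2 hx)
    have hu₀ : u.val ∈ 𝒜 0 := hu ▸ x.2
    obtain ⟨d, hd⟩ := exists_gradeZeroUnits_eq 𝒜 ⟨u, 0, hu₀⟩ hu₀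
    exact ⟨d, Subtype.ext ((congrArg (fun v => v.val.val) hd).trans hu)⟩

theorem exists_eq_scalarGL_mul_gradeZeroGL [Nontrivial E] [Fintype ι] [DecidableEq ι]
    [Nonempty ι] (hdiv : IsGradedDivisionRing 𝒜) {γ : Γ} {A : homogeneousGL 𝒜 (0 : ι → Γ)}
    (hA : A.val.val ∈ MatrixGrade 𝒜 (0 : ι → Γ) γ) :
    ∃ t, t.val.val ∈ 𝒜 γ ∧ ∃ B, A = scalarGL 𝒜 ι t * gradeZeroGL 𝒜 ι B := by
  obtain ⟨i, j, hij⟩ : ∃ i j, A.val.val i j ≠ 0 := by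
    by_contra! h
    exact A.val.ne_zero (Matrix.ext h)
  have hijγ : A.val.val i j ∈ 𝒜 γ := by simpa using hA i j
  obtain ⟨t, ht⟩ := hdiv γ _ hijγ hij
  rw [← ht] at hijγ
  have htA := mul_mem_matrixGrade
    (diagonal_mem_matrixGrade (ι := ι) 𝒜 fun _ => inv_mem_neg 𝒜 hijγ) hA
  rw [neg_add_cancel] at htA
  obtain ⟨B, hB⟩ := exists_gradeZeroGL_eq 𝒜 ((scalarGL 𝒜 ι ⟨t, γ, hijγ⟩)⁻¹ * A) htA
  exact ⟨⟨t, γ, hijγ⟩, hijγ, B, by simp [hB]⟩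

variable (hdiv : IsGradedDivisionRing 𝒜) (hunram : IsUnramifiedOverCenter 𝒜)
include hdiv hunram

theorem exists_eq_center_mul_gradeZeroUnits [Nontrivial E] (u : homogeneousUnits 𝒜) :
    ∃ t ∈ Subgroup.center (homogeneousUnits 𝒜), ∃ d, u = t * gradeZeroUnits 𝒜 d := by
  obtain ⟨γ, hu⟩ := u.2
  obtain ⟨x, hx0, hxγ, hxc⟩ := hunram γ ⟨_, u.val.ne_zero, hu⟩
  obtain ⟨t, rfl⟩ := hdiv γ x hxγ hx0
  obtain ⟨d, hd⟩ := exists_gradeZeroUnits_eq 𝒜 (⟨t, γ, hxγ⟩⁻¹ * u)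
    (by simpa using mul_mem_graded (inv_mem_neg 𝒜 hxγ) hu)
  refine ⟨⟨t, γ, hxγ⟩, Subgroup.mem_center_iff.2 fun g => ?_, d, by simp [hd]⟩
  exact Subtype.ext (Units.ext (Semigroup.mem_center_iff.1 hxc g.val.val))

theorem commutator_homogeneousUnits_le [Nontrivial E] : commutator (homogeneousUnits 𝒜) ≤
    (commutator (GradeZero.subring 𝒜)ˣ).map (gradeZeroUnits 𝒜) := by
  rw [commutator_def (homogeneousUnits 𝒜), Subgroup.commutator_le]
  intro u _ v _
  obtain ⟨s, hs, x, rfl⟩ := hdiv.exists_eq_center_mul_gradeZeroUnits hunram u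
  obtain ⟨t, ht, y, rfl⟩ := hdiv.exists_eq_center_mul_gradeZeroUnits hunram v
  rw [commutatorElement_center_mul_left hs, commutatorElement_center_mul_right ht,
    ← map_commutatorElement]
  exact Subgroup.mem_map_of_mem _
    (Subgroup.commutator_mem_commutator (Subgroup.mem_top x) (Subgroup.mem_top y))

end IsGradedDivisionRing

section Determinant

variable {n : ℕ} {detE : homogeneousGL 𝒜 (0 : Fin n → Γ) →* Abelianization (homogeneousUnits 𝒜)}

/-- `detE` is the homogeneous Dieudonné determinant: it is computed by strict Bruhat normal forms,
`detE (T * diag(u₁, …, uₙ) * P_π * V) = sgn(π) * u₁ ⋯ uₙ`. -/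
def IsHomogeneousDieudonneDet
    (detE : homogeneousGL 𝒜 (0 : Fin n → Γ) →* Abelianization (homogeneousUnits 𝒜)) : Prop :=
  ∀ (A : homogeneousGL 𝒜 (0 : Fin n → Γ)) (T : Matrix (Fin n) (Fin n) E) (u : Fin n → E)
    (π : Equiv.Perm (Fin n)) (V : Matrix (Fin n) (Fin n) E),
    UnipotentLower T → (∀ i, IsUnit (u i)) → UnipotentUpper V →
    UnipotentUpper (π.permMatrix E * V * (π⁻¹).permMatrix E) →
    A.val.val = T * diagonal u * π.permMatrix E * V →
    ∀ w : homogeneousUnits 𝒜,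
      w.val.val = ((Equiv.Perm.sign π : ℤ) : E) * (List.ofFn u).prod →
      detE A = Abelianization.of w

namespace IsHomogeneousDieudonneDet

variable (hdet : IsHomogeneousDieudonneDet detE)
include hdet

theorem apply_eq_of_val_eq_diagonalUnits {A : homogeneousGL 𝒜 (0 : Fin n → Γ)} {u : Fin n → Eˣ}
    (hA : A.val = diagonalUnits u) {w : homogeneousUnits 𝒜} (hw : w.val = (List.ofFn u).prod) :
    detE A = Abelianization.of w := by
  have hlower : UnipotentLower (1 : Matrix (Fin n) (Fin n) E) :=
    ⟨fun i j h => one_apply_ne h.ne, one_apply_eq⟩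
  have hupper : UnipotentUpper (1 : Matrix (Fin n) (Fin n) E) :=
    ⟨fun i j h => one_apply_ne h.ne', one_apply_eq⟩
  refine hdet A 1 (fun i => u i) 1 1 hlower (fun i => (u i).isUnit) hupper ?_ ?_ w ?_
  · simpa [permMatrix_one] using hupper
  · simp [hA, val_diagonalUnits, permMatrix_one]
  · rw [hw, ← Units.coeHom_apply, map_list_prod, List.map_ofFn]
    simp [Function.comp_def]

theorem apply_scalarGL (t : homogeneousUnits 𝒜) :
    detE (scalarGL 𝒜 (Fin n) t) = Abelianization.of (t ^ n) :=
  hdet.apply_eq_of_val_eq_diagonalUnits (u := fun _ => t.val) rfl (by simp [List.ofFn_const])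

variable [NeZero n]

theorem apply_gradeZeroGL_diagonalUnits_mulSingle (d : (GradeZero.subring 𝒜)ˣ) :
    detE (gradeZeroGL 𝒜 (Fin n) (diagonalUnits (Pi.mulSingle 0 d))) =
      Abelianization.of (gradeZeroUnits 𝒜 d) := by
  refine hdet.apply_eq_of_val_eq_diagonalUnits (val_gradeZeroGL_diagonalUnits 𝒜 _) ?_
  obtain ⟨m, rfl⟩ := Nat.exists_eq_succ_of_ne_zero (NeZero.ne n)
  simp [List.ofFn_succ]

variable [Nontrivial E] (hdiv : IsGradedDivisionRing 𝒜)
  (hE₀ : n ≠ 2 ∨ ∃ x : GradeZero.subring 𝒜, x ≠ 0 ∧ x ≠ 1)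
include hdiv hE₀

theorem exists_apply_gradeZeroGL_eq (B : (Matrix (Fin n) (Fin n) (GradeZero.subring 𝒜))ˣ) :
    ∃ d, detE (gradeZeroGL 𝒜 (Fin n) B) = Abelianization.of (gradeZeroUnits 𝒜 d) ∧
      (d ∈ commutator (GradeZero.subring 𝒜)ˣ →
        B ∈ commutator (Matrix (Fin n) (Fin n) (GradeZero.subring 𝒜))ˣ) := by
  let _ := hdiv.gradeZeroDivisionRing
  obtain ⟨C, hC, d, hCB⟩ := exists_mem_transvectionSubgroup_mul_eq_diagonalUnits 0 B
  replace hC := transvectionSubgroup_le_commutator (by simpa using hE₀) hC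
  have hdetC : detE (gradeZeroGL 𝒜 (Fin n) C) = 1 :=
    Abelianization.commutator_subset_ker (detE.comp (gradeZeroGL 𝒜 (Fin n))) hC
  refine ⟨d, ?_, fun hd => (Subgroup.mul_mem_cancel_left _ hC).1 ?_⟩
  · rw [← hdet.apply_gradeZeroGL_diagonalUnits_mulSingle, ← hCB, map_mul, map_mul,
      hdetC, one_mul]
  · rw [hCB]
    exact map_mem_commutator (diagonalUnits.comp (MonoidHom.mulSingle _ 0)) hd

variable (hunram : IsUnramifiedOverCenter 𝒜)
include hunram

theorem degree_eq_zero_of_apply_eq_one (htf : ∀ γ : Γ, n • γ = 0 → γ = 0) {γ : Γ}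
    {A : homogeneousGL 𝒜 (0 : Fin n → Γ)} (hA : A.val.val ∈ MatrixGrade 𝒜 (0 : Fin n → Γ) γ)
    (hA1 : detE A = 1) : γ = 0 := by
  obtain ⟨t, ht, B, rfl⟩ := hdiv.exists_eq_scalarGL_mul_gradeZeroGL hA
  obtain ⟨d, hd, -⟩ := hdet.exists_apply_gradeZeroGL_eq hdiv hE₀ B
  rw [map_mul, hdet.apply_scalarGL, hd, ← map_mul, ← MonoidHom.mem_ker, Abelianization.ker_of]
    at hA1
  obtain ⟨d', -, hd'⟩ := hdiv.commutator_homogeneousUnits_le hunram hA1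
  have hn : (t ^ n * gradeZeroUnits 𝒜 d).val.val ∈ 𝒜 (n • γ + 0) :=
    mul_mem_graded (pow_mem_graded n ht) d.val.2
  have h0 : (t ^ n * gradeZeroUnits 𝒜 d).val.val ∈ 𝒜 0 := hd' ▸ d'.val.2
  rw [add_zero] at hn
  exact htf γ (DirectSum.degree_eq_of_mem_mem 𝒜 hn h0 (Units.ne_zero _))

theorem ker_eq_commutator (htf : ∀ γ : Γ, n • γ = 0 → γ = 0) :
    detE.ker = commutator (homogeneousGL 𝒜 (0 : Fin n → Γ)) := by
  refine le_antisymm (fun A hA => ?_) (Abelianization.commutator_subset_ker detE)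
  obtain ⟨γ, hγ⟩ := A.2
  obtain rfl := hdet.degree_eq_zero_of_apply_eq_one hdiv hE₀ hunram htf hγ hA
  obtain ⟨B, rfl⟩ := exists_gradeZeroGL_eq 𝒜 A hγ
  obtain ⟨d, hd, hdB⟩ := hdet.exists_apply_gradeZeroGL_eq hdiv hE₀ B
  rw [MonoidHom.mem_ker, hd, ← MonoidHom.mem_ker, Abelianization.ker_of] at hA
  have hd_comm := (Subgroup.mem_map_iff_mem (gradeZeroUnits_injective 𝒜)).1
    (hdiv.commutator_homogeneousUnits_le hunram hA)
  exact map_mem_commutator _ (hdB hd_comm)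

end IsHomogeneousDieudonneDet

end Determinant

end Graded

/-- let `E` be a `Γ`-graded division ring, unramified over its center
(`Γ_E = Γ_T`), with `Γ` having no nonzero `n`-torsion and `Mₙ(E₀) ≠ M₂(𝔽₂)`, and let
`S = Mₙ(E)` with the unshifted grading.  Then the kernel of the homogeneous Dieudonné
determinant `det_E` equals `[GLₙ^h(E), GLₙ^h(E)]`, so `det_E` induces an injection
`GLₙ^h(E)/[GLₙ^h(E), GLₙ^h(E)] ↪ E_h*/[E_h*, E_h*]`. -/
theorem ker_det_eq_commutator_unramified {Γ E : Type*} [AddCommGroup Γ] [DecidableEq Γ]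
    [Ring E] [Nontrivial E] (𝒜 : Γ → AddSubgroup E) [GradedRing 𝒜]
    (hdiv : ∀ (γ : Γ) (x : E), x ∈ 𝒜 γ → x ≠ 0 → IsUnit x)
    {n : ℕ} (hn : 0 < n)
    -- `Γ` has no nonzero `n`-torsion
    (htf : ∀ γ : Γ, n • γ = 0 → γ = 0)
    -- `E` is unramified over its center `T = Z(E)`, i.e. `Γ_E = Γ_T`
    (hunram : ∀ γ : Γ, (∃ x : E, x ≠ 0 ∧ x ∈ 𝒜 γ) →
      ∃ x : E, x ≠ 0 ∧ x ∈ 𝒜 γ ∧ x ∈ Set.center E)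
    -- `Mₙ(E₀) ≠ M₂(𝔽₂)`
    (hF2 : ¬(n = 2 ∧ ∀ x ∈ 𝒜 (0 : Γ), x = 0 ∨ x = 1))
    (Eh : Subgroup Eˣ) (hEh : ∀ u : Eˣ, u ∈ Eh ↔ ∃ γ, u.val ∈ 𝒜 γ)
    -- `Sh = GLₙ^h(E)`, the homogeneous units for the unshifted grading
    (Sh : Subgroup (Matrix (Fin n) (Fin n) E)ˣ)
    (hSh : ∀ A : (Matrix (Fin n) (Fin n) E)ˣ,
      A ∈ Sh ↔ ∃ lam, A.val ∈ MatrixGrade 𝒜 (fun _ : Fin n => (0 : Γ)) lam)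
    -- `detE` is the homogeneous Dieudonné determinant, characterized via strict
    -- Bruhat normal forms
    (detE : ↥Sh →* Abelianization ↥Eh)
    (hdetE : ∀ (A : ↥Sh) (T : Matrix (Fin n) (Fin n) E) (u : Fin n → E)
      (π : Equiv.Perm (Fin n)) (V : Matrix (Fin n) (Fin n) E),
      UnipotentLower T → (∀ i, IsUnit (u i)) → UnipotentUpper V →
      UnipotentUpper (π.permMatrix E * V * (π⁻¹).permMatrix E) →
      A.val.val = T * Matrix.diagonal u * π.permMatrix E * V →
      ∀ w : ↥Eh,
        w.val.val = ((Equiv.Perm.sign π : ℤ) : E) * (List.ofFn u).prod →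
        detE A = Abelianization.of w) :
    (∀ A : ↥Sh, detE A = 1 ↔ A.val ∈ ⁅Sh, Sh⁆) ∧
    ∃ g : Abelianization ↥Sh →* Abelianization ↥Eh,
      Function.Injective g ∧ ∀ A : ↥Sh, g (Abelianization.of A) = detE A := by
  have := NeZero.of_pos hn
  obtain rfl : Eh = homogeneousUnits 𝒜 := Subgroup.ext hEh
  obtain rfl : Sh = homogeneousGL 𝒜 (0 : Fin n → Γ) := Subgroup.ext hSh
  have hE₀ : n ≠ 2 ∨ ∃ x : SetLike.GradeZero.subring 𝒜, x ≠ 0 ∧ x ≠ 1 := by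
    by_contra! h
    refine hF2 ⟨h.1, fun x hx => or_iff_not_imp_left.2 fun hx0 => ?_⟩
    exact congrArg Subtype.val (h.2 ⟨x, hx⟩ (Subtype.coe_ne_coe.1 hx0))
  have hdet : IsHomogeneousDieudonneDet detE := hdetE
  have hker := hdet.ker_eq_commutator hdiv hE₀ hunram htf
  refine ⟨fun A => ?_, Abelianization.lift detE, abelianization_lift_injective hker,
    Abelianization.lift_apply_of detE⟩
  rw [← MonoidHom.mem_ker, hker, ← Subgroup.map_subtype_commutator]
  exact (Subgroup.mem_map_iff_mem (Subgroup.subtype_injective _)).symm
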